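/- Let 0 < α < 1/2 and let f be smooth on the punctured unit disk with |z|^{2α} f(z) bounded near 0. Then on any relatively compact open U ∋ 0, the equation ∂g/∂z̄ = f has a solution which extends continuously to the origin. -/

import Mathlib

open Complex MeasureTheory Metric Set

/-- The Wirtinger derivative `∂/∂z̄` of a function `f : ℂ → ℂ`. -/
noncomputable def dbar (f : ℂ → ℂ) (z : ℂ) : ℂ :=
  (fderiv ℝ f z 1 + Complex.I * fderiv ℝ f z Complex.I) / 2

/-!
The solution is the Cauchy transform `C F`, the convolution of `1 / (π w)` with the extension `F` of
`f` by zero off `U`. The singularity of `f` enters only through integrability: `|z|^(-2α)` lies in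
`L^q` near `0` for some `q > 2`, precisely because `2α · 2 < 2`. The Cauchy kernel is in `L^p` near
`0` for the conjugate exponent `p < 2` and bounded away from `0`, and the convolution of an `L^p`
with an `L^q` function is continuous, so `C F` is continuous on all of `ℂ`.

Regularity and the equation are local: if `F` agrees near a point with a compactly supported `C^n`
function `u`, then `C F = C u + C (F - u)`, where the second term is holomorphic off the support of
`F - u`. For the first, `∂/∂z̄ (C u) = C (∂u/∂z̄) = u` by the Cauchy–Pompeiu formula. In polar
coordinates `2 e^(-iθ) ∂u/∂z̄` is the radial derivative, which integrates to a boundary term at the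
centre, plus `i / r` times the angular one, which integrates to zero over circles.
-/

open Filter Topology Convolution ComplexConjugate
open scoped ENNReal Real

section Dbar

variable {u v : ℂ → ℂ} {z : ℂ}

lemma dbar_add (hu : DifferentiableAt ℝ u z) (hv : DifferentiableAt ℝ v z) :
    dbar (u + v) z = dbar u z + dbar v z := by
  simp only [dbar, fderiv_add hu hv, add_apply]
  ring

lemma dbar_congr_of_eventuallyEq (h : u =ᶠ[𝓝 z] v) : dbar u z = dbar v z := by
  simp only [dbar, h.fderiv_eq]

lemma dbar_eq_zero_of_differentiableAt (hu : DifferentiableAt ℂ u z) : dbar u z = 0 := by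
  rw [dbar, (differentiableAt_complex_iff_differentiableAt_real.1 hu).2, smul_eq_mul, ← mul_assoc,
    I_mul_I]
  ring

lemma dbar_mul_conj (u : ℂ → ℂ) (z v : ℂ) :
    dbar u z * conj v = (fderiv ℝ u z v + I * fderiv ℝ u z (I * v)) / 2 := by
  have apply_eq (w : ℂ) : fderiv ℝ u z w = w.re * fderiv ℝ u z 1 + w.im * fderiv ℝ u z I := by
    conv_lhs => rw [show w = w.re • (1 : ℂ) + w.im • I by simp, map_add, map_smul, map_smul]
    simp
  have conj_eq : conj v = v.re - v.im * I := by simp [Complex.ext_iff]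
  rw [dbar, apply_eq v, apply_eq (I * v), conj_eq]
  simp only [I_mul_re, I_mul_im, ofReal_neg]
  linear_combination (-v.im * fderiv ℝ u z I / 2) * I_sq

end Dbar

section Polar

lemma integrableOn_Ioi_prod_Ioo_of_forall_gt_eq_zero {E : Type*} [NormedAddCommGroup E]
    {ψ : ℝ × ℝ → E} (hψ : Continuous ψ) {a b c R : ℝ} (hR : ∀ p : ℝ × ℝ, R < p.1 → ψ p = 0) :
    IntegrableOn ψ (Ioi a ×ˢ Ioo b c) := by
  refine (hψ.continuousOn.integrableOn_compact
    (isCompact_Icc.prod isCompact_Icc : IsCompact (Icc a R ×ˢ Icc b c))).of_forall_sdiff_eq_zero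
    (measurableSet_Ioi.prod measurableSet_Ioo) ?_
  rintro p ⟨⟨hpa, hpbc⟩, hp⟩
  refine hR p ?_
  by_contra! hpR
  exact hp ⟨⟨hpa.le, hpR⟩, Ioo_subset_Icc_self hpbc⟩

lemma integral_inv_mul_dbar_polar (φ : ℂ → ℂ) (z : ℂ) : ∫ w, w⁻¹ * dbar φ (z + w) =
    ∫ p in Ioi (0 : ℝ) ×ˢ Ioo (-π) π,
      (fderiv ℝ φ (z + p.1 • circleMap 0 1 p.2) (circleMap 0 1 p.2) +
        I * fderiv ℝ φ (z + p.1 • circleMap 0 1 p.2) (I * circleMap 0 1 p.2)) / 2 := by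
  rw [← Complex.integral_comp_polarCoord_symm, polarCoord_target]
  refine setIntegral_congr_fun (measurableSet_Ioi.prod measurableSet_Ioo) ?_
  rintro ⟨r, θ⟩ ⟨hr, -⟩
  have hr0 : (r : ℂ) ≠ 0 := ofReal_ne_zero.2 (ne_of_gt hr)
  have hpolar : Complex.polarCoord.symm (r, θ) = r * circleMap 0 1 θ := by
    simp [Complex.polarCoord_symm_apply, circleMap, exp_mul_I]
  have hinv : (circleMap 0 1 θ)⁻¹ = conj (circleMap 0 1 θ) := inv_eq_conj (by simp)
  simp only [hpolar]
  rw [← dbar_mul_conj, ← hinv, mul_inv, real_smul, real_smul]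
  field_simp

variable {E F : Type*} [NormedAddCommGroup E] [NormedSpace ℝ E] [NormedAddCommGroup F]
  [NormedSpace ℝ F]

lemma integrableOn_fderiv_polar {φ : ℂ → F} (hφ : ContDiff ℝ 1 φ) (hc : HasCompactSupport φ)
    (z : ℂ) {v : ℝ × ℝ → ℂ} (hv : Continuous v) :
    IntegrableOn (fun p : ℝ × ℝ => fderiv ℝ φ (z + p.1 • circleMap 0 1 p.2) (v p))
      (Ioi 0 ×ˢ Ioo (-π) π) := by
  obtain ⟨R, hR⟩ := (hc.fderiv (𝕜 := ℝ)).isCompact.isBounded.subset_closedBall z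
  have hfar (p : ℝ × ℝ) (hp : R < p.1) : fderiv ℝ φ (z + p.1 • circleMap 0 1 p.2) = 0 := by
    refine image_eq_zero_of_notMem_tsupport fun hmem => hp.not_ge ((le_abs_self _).trans ?_)
    simpa using hR hmem
  exact integrableOn_Ioi_prod_Ioo_of_forall_gt_eq_zero (R := R)
    (((hφ.continuous_fderiv one_ne_zero).comp (by fun_prop)).clm_apply hv)
    fun p hp => DFunLike.congr_fun (hfar p hp) (v p)

variable [CompleteSpace F]

lemma integral_Ioi_fderiv_ray {φ : E → F} (hφ : ContDiff ℝ 1 φ) (hc : HasCompactSupport φ)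
    (x : E) {v : E} (hv : v ≠ 0) :
    ∫ r in Ioi (0 : ℝ), fderiv ℝ φ (x + r • v) v = -φ x := by
  have hray (r : ℝ) : HasDerivAt (fun r : ℝ => x + r • v) v r := by
    simpa using ((hasDerivAt_id r).smul_const v).const_add x
  have hderiv (r : ℝ) : deriv (fun r : ℝ => φ (x + r • v)) r = fderiv ℝ φ (x + r • v) v :=
    ((hφ.differentiable one_ne_zero _).hasFDerivAt.comp_hasDerivAt r (hray r)).deriv
  have hclosed : IsClosedEmbedding fun r : ℝ => x + r • v :=
    (Homeomorph.addLeft x).isClosedEmbedding.comp (isClosedEmbedding_smul_left hv)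
  have := (hc.comp_isClosedEmbedding hclosed).integral_Ioi_deriv_eq (hφ.comp (by fun_prop)) 0
  simpa [Function.comp_def, hderiv] using this

lemma integral_fderiv_circleMap {φ : ℂ → F} (hφ : ContDiff ℝ 1 φ) (z : ℂ) (r : ℝ) :
    ∫ θ in Ioo (-π) π, fderiv ℝ φ (circleMap z r θ) (circleMap 0 r θ * I) = 0 := by
  have hderiv (θ : ℝ) : HasDerivAt (fun θ => φ (circleMap z r θ))
      (fderiv ℝ φ (circleMap z r θ) (circleMap 0 r θ * I)) θ :=
    (hφ.differentiable one_ne_zero _).hasFDerivAt.comp_hasDerivAt θ (hasDerivAt_circleMap z r θ)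
  have hcont : Continuous fun θ => fderiv ℝ φ (circleMap z r θ) (circleMap 0 r θ * I) :=
    ((hφ.continuous_fderiv one_ne_zero).comp (continuous_circleMap z r)).clm_apply (by fun_prop)
  have hπ : circleMap z r (-π) = circleMap z r π := by simp [circleMap, exp_neg, exp_pi_mul_I]
  rw [← integral_Ioc_eq_integral_Ioo, ← intervalIntegral.integral_of_le (by linarith [Real.pi_pos]),
    intervalIntegral.integral_eq_sub_of_hasDerivAt (fun θ _ => hderiv θ)
      (hcont.intervalIntegrable _ _), hπ, sub_self]

lemma integral_fderiv_polar_radial {φ : ℂ → F} (hφ : ContDiff ℝ 1 φ) (hc : HasCompactSupport φ)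
    (z : ℂ) :
    ∫ p in Ioi (0 : ℝ) ×ˢ Ioo (-π) π,
      fderiv ℝ φ (z + p.1 • circleMap 0 1 p.2) (circleMap 0 1 p.2) = -((2 * π) • φ z) := by
  have hint := integrableOn_fderiv_polar hφ hc z (v := fun p => circleMap 0 1 p.2) (by fun_prop)
  rw [Measure.volume_eq_prod, IntegrableOn, ← Measure.prod_restrict] at hint
  rw [Measure.volume_eq_prod, ← Measure.prod_restrict, integral_prod_symm _ hint]
  simp_rw [integral_Ioi_fderiv_ray hφ hc z (circleMap_ne_center one_ne_zero)]
  rw [setIntegral_const, Real.volume_real_Ioo_of_le (by linarith [Real.pi_pos]), smul_neg]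
  ring_nf

lemma integral_fderiv_polar_angular {φ : ℂ → F} (hφ : ContDiff ℝ 1 φ) (hc : HasCompactSupport φ)
    (z : ℂ) :
    ∫ p in Ioi (0 : ℝ) ×ˢ Ioo (-π) π,
      fderiv ℝ φ (z + p.1 • circleMap 0 1 p.2) (I * circleMap 0 1 p.2) = 0 := by
  have hint := integrableOn_fderiv_polar hφ hc z (v := fun p => I * circleMap 0 1 p.2)
    (by fun_prop)
  rw [Measure.volume_eq_prod] at hint ⊢
  rw [setIntegral_prod _ hint]
  refine setIntegral_eq_zero_of_forall_eq_zero fun r hr => ?_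
  have hsmul (θ : ℝ) : fderiv ℝ φ (circleMap z r θ) (circleMap 0 r θ * I) =
      r • fderiv ℝ φ (z + r • circleMap 0 1 θ) (I * circleMap 0 1 θ) := by
    rw [← map_smul]
    simp [circleMap, mul_comm, mul_left_comm]
  have hcircle := integral_fderiv_circleMap hφ z r
  simp_rw [hsmul, integral_smul] at hcircle
  exact (smul_eq_zero.1 hcircle).resolve_left (ne_of_gt hr)

theorem integral_inv_mul_dbar {φ : ℂ → ℂ} (hφ : ContDiff ℝ 1 φ) (hc : HasCompactSupport φ)
    (z : ℂ) : ∫ w, w⁻¹ * dbar φ (z + w) = -(π * φ z) := by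
  have hint {v : ℝ × ℝ → ℂ} (hv : Continuous v) := integrableOn_fderiv_polar hφ hc z hv
  rw [integral_inv_mul_dbar_polar, integral_div, integral_add (hint (by fun_prop))
    ((hint (by fun_prop)).const_mul I), integral_const_mul, integral_fderiv_polar_radial hφ hc,
    integral_fderiv_polar_angular hφ hc, real_smul]
  push_cast
  ring

end Polar

section HolderConvolution

variable {G E E' F : Type*} [AddCommGroup G] [TopologicalSpace G] [IsTopologicalAddGroup G]
  [MeasurableSpace G] [BorelSpace G] {μ : Measure G} [μ.IsAddLeftInvariant] [μ.IsNegInvariant]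
  [NormedAddCommGroup E] [NormedSpace ℝ E] [NormedAddCommGroup E'] [NormedSpace ℝ E']
  [NormedAddCommGroup F] [NormedSpace ℝ F] (L : E →L[ℝ] E' →L[ℝ] F) {f : G → E} {g : G → E'}
  {p q : ℝ≥0∞} [p.HolderConjugate q]

lemma convolutionExists_of_memLp (hf : MemLp f p μ) (hg : MemLp g q μ) :
    ConvolutionExists f g L μ := fun x =>
  memLp_one_iff_integrable.1 <| L.memLp_of_bilin 1 hf <|
    hg.comp_measurePreserving (Measure.measurePreserving_sub_left μ x)

lemma enorm_convolution_le_eLpNorm_mul_eLpNorm (hf : AEStronglyMeasurable f μ)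
    (hg : AEStronglyMeasurable g μ) (x : G) :
    ‖(f ⋆[L, μ] g) x‖ₑ ≤ ‖L‖ₑ * eLpNorm f p μ * eLpNorm g q μ := by
  have hx := Measure.measurePreserving_sub_left μ x
  calc ‖(f ⋆[L, μ] g) x‖ₑ
      ≤ eLpNorm (fun t => L (f t) (g (x - t))) 1 μ := by
        rw [eLpNorm_one_eq_lintegral_enorm]
        exact enorm_integral_le_lintegral_enorm _
    _ ≤ ‖L‖₊ * eLpNorm f p μ * eLpNorm (g ∘ (x - ·)) q μ :=
        eLpNorm_le_eLpNorm_mul_eLpNorm_of_nnnorm hf (hg.comp_measurePreserving hx) (L · ·) ‖L‖₊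
          (.of_forall fun t => L.le_opNorm₂ (f t) (g (x - t)))
    _ = ‖L‖ₑ * eLpNorm f p μ * eLpNorm g q μ := by
        rw [eLpNorm_comp_measurePreserving hg hx, enorm_eq_nnnorm]

lemma continuous_convolution_of_memLp [LocallyCompactSpace G] [SecondCountableTopology G]
    [μ.Regular] (hq : q ≠ ∞) (hf : MemLp f p μ) (hg : MemLp g q μ) :
    Continuous (f ⋆[L, μ] g) := by
  have hfloc : LocallyIntegrable f μ := hf.locallyIntegrable (ENNReal.HolderConjugate.one_le p q)
  refine continuous_of_uniform_approx_of_continuous fun U hU => ?_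
  obtain ⟨ε, hε, hεU⟩ := mem_uniformity_edist.1 hU
  obtain ⟨δ, hδ, hδε⟩ : ∃ δ, 0 < δ ∧ δ * (‖L‖ₑ * eLpNorm f p μ) < ε :=
    ENNReal.exists_pos_mul_lt (ENNReal.mul_ne_top enorm_ne_top hf.2.ne) hε.ne'
  obtain ⟨h, hhc, hgh, hh, hhq⟩ := hg.exists_hasCompactSupport_eLpNorm_sub_le hq hδ.ne'
  refine ⟨f ⋆[L, μ] h, hhc.continuous_convolution_right L hfloc hh, fun x => hεU ?_⟩
  have hsub : (f ⋆[L, μ] g) x - (f ⋆[L, μ] h) x = (f ⋆[L, μ] (g - h)) x := by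
    refine (integral_sub (convolutionExists_of_memLp L hf hg x)
      (convolutionExists_of_memLp L hf hhq x)).symm.trans ?_
    simp [convolution_def]
  calc edist ((f ⋆[L, μ] g) x) ((f ⋆[L, μ] h) x) = ‖(f ⋆[L, μ] (g - h)) x‖ₑ := by
        rw [edist_eq_enorm_sub, hsub]
    _ ≤ ‖L‖ₑ * eLpNorm f p μ * eLpNorm (g - h) q μ :=
        enorm_convolution_le_eLpNorm_mul_eLpNorm L hf.1 (hg.1.sub hhq.1) x
    _ ≤ ‖L‖ₑ * eLpNorm f p μ * δ := by gcongr
    _ < ε := by rwa [mul_comm]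

end HolderConvolution

lemma exists_norm_rpow_mul_le_of_isCompact {E V : Type*} [NormedAddCommGroup E]
    [NormedAddCommGroup V] {K : Set E} (hK : IsCompact K) {s C r : ℝ} (hr : 0 < r) {f : E → V}
    (hf : ContinuousOn f (K \ {0})) (hC : ∀ x, 0 < ‖x‖ → ‖x‖ < r → ‖x‖ ^ s * ‖f x‖ ≤ C) :
    ∃ M, ∀ x ∈ K \ {0}, ‖x‖ ^ s * ‖f x‖ ≤ M := by
  have hsub : K \ ball 0 r ⊆ K \ {0} := sdiff_subset_sdiff_right (by simpa using hr)
  have hcont : ContinuousOn (fun x : E => ‖x‖ ^ s * ‖f x‖) (K \ ball 0 r) :=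
    (continuousOn_id.norm.rpow_const fun x hx => .inl (norm_ne_zero_iff.2 (hsub hx).2)).mul
      (hf.mono hsub).norm
  obtain ⟨M, hM⟩ := (hK.diff isOpen_ball).bddAbove_image hcont
  refine ⟨max C M, fun x ⟨hxK, hx⟩ => ?_⟩
  rcases lt_or_ge ‖x‖ r with hxr | hxr
  · exact le_max_of_le_left (hC x (norm_pos_iff.2 hx) hxr)
  · exact le_max_of_le_right (hM (mem_image_of_mem _ ⟨hxK, by simpa using hxr⟩))

section NormPower

variable {E V : Type*} [NormedAddCommGroup E] [NormedSpace ℝ E] [FiniteDimensional ℝ E]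
  [Nontrivial E] [MeasurableSpace E] [BorelSpace E] [NormedAddCommGroup V] {μ : Measure E}
  [μ.IsAddHaarMeasure] {K : Set E} {s : ℝ} {p : ℝ≥0∞}

lemma memLp_restrict_norm_rpow_neg (hK : Bornology.IsBounded K) (hp : p ≠ ∞)
    (hs : s * p.toReal < Module.finrank ℝ E) :
    MemLp (fun x : E => ‖x‖ ^ (-s)) p (μ.restrict K) := by
  have hmeas : Measurable fun x : E => ‖x‖ ^ (-s) := by fun_prop
  rcases eq_or_ne p 0 with rfl | hp0
  · exact memLp_zero_iff_aestronglyMeasurable.2 hmeas.aestronglyMeasurable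
  obtain ⟨R, hR⟩ := hK.subset_ball 0
  rw [← integrable_norm_rpow_iff hmeas.aestronglyMeasurable hp0 hp]
  refine (integrableOn_ball_of_norm_le_rpow (C := 1) Module.finrank_pos hs (.of_forall fun x => ?_)
    (hmeas.norm.pow_const _).aestronglyMeasurable).mono_set hR
  rw [Real.norm_of_nonneg (by positivity), Real.norm_of_nonneg (by positivity),
    ← Real.rpow_mul (norm_nonneg x), one_mul, neg_mul]

lemma memLp_restrict_of_norm_rpow_mul_le (hK : IsCompact K) (hp : p ≠ ∞)
    (hs : s * p.toReal < Module.finrank ℝ E) {f : E → V} (hf : ContinuousOn f (K \ {0})) {C r : ℝ}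
    (hr : 0 < r) (hC : ∀ x, 0 < ‖x‖ → ‖x‖ < r → ‖x‖ ^ s * ‖f x‖ ≤ C) :
    MemLp f p (μ.restrict K) := by
  obtain ⟨M, hM⟩ := exists_norm_rpow_mul_le_of_isCompact hK hr hf hC
  have hmeas : MeasurableSet (K \ {0}) := hK.measurableSet.diff (measurableSet_singleton 0)
  rw [← Measure.restrict_congr_set (sdiff_null_ae_eq_self (measure_singleton 0))]
  refine (memLp_restrict_norm_rpow_neg (hK.isBounded.subset sdiff_subset) hp hs).of_le_mul
    (c := M) (hf.aestronglyMeasurable hmeas) ?_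
  filter_upwards [ae_restrict_mem hmeas] with x hx
  have hx0 : 0 < ‖x‖ := norm_pos_iff.2 hx.2
  rw [Real.norm_of_nonneg (by positivity), Real.rpow_neg hx0.le, ← div_eq_mul_inv,
    le_div_iff₀' (by positivity)]
  exact hM x hx

lemma exists_gt_memLp_restrict_of_norm_rpow_mul_le (hK : IsCompact K) (hp : p ≠ ∞)
    (hs : s * p.toReal < Module.finrank ℝ E) {f : E → V} (hf : ContinuousOn f (K \ {0})) {C r : ℝ}
    (hr : 0 < r) (hC : ∀ x, 0 < ‖x‖ → ‖x‖ < r → ‖x‖ ^ s * ‖f x‖ ≤ C) :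
    ∃ q > p, MemLp f q (μ.restrict K) := by
  have hnear : ∀ᶠ t in 𝓝[>] p.toReal, s * t < Module.finrank ℝ E :=
    (continuous_const_mul s).continuousWithinAt.eventually_lt_const hs
  obtain ⟨t, hst, hpt⟩ := (hnear.and self_mem_nhdsWithin).exists
  refine ⟨ENNReal.ofReal t, (ENNReal.lt_ofReal_iff_toReal_lt hp).2 hpt,
    memLp_restrict_of_norm_rpow_mul_le hK ENNReal.ofReal_ne_top ?_ hf hr hC⟩
  rwa [ENNReal.toReal_ofReal (ENNReal.toReal_nonneg.trans hpt.le)]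

end NormPower

lemma exists_forall_ball_le_dist_of_notMem_tsupport {X E : Type*} [PseudoMetricSpace X] [Zero E]
    {h : X → E} {z : X} (hz : z ∉ tsupport h) :
    ∃ ε > 0, ∀ x ∈ ball z ε, ∀ w, h w ≠ 0 → ε ≤ dist x w := by
  obtain ⟨ε, hε, hsub⟩ := isOpen_iff.1 (isClosed_tsupport h).isOpen_compl z hz
  refine ⟨ε / 2, half_pos hε, fun x hx w hw => ?_⟩
  have hzw : ε ≤ dist w z := by
    by_contra! hlt
    exact hsub hlt (subset_tsupport h hw)
  linarith [dist_triangle_left w z x, mem_ball.1 hx]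

lemma exists_contDiff_hasCompactSupport_eventuallyEq {E F : Type*} [NormedAddCommGroup E]
    [NormedSpace ℝ E] [FiniteDimensional ℝ E] [NormedAddCommGroup F] [NormedSpace ℝ F] {f : E → F}
    {V : Set E} {n : ℕ∞} (hV : IsOpen V) (hf : ContDiffOn ℝ n f V) {x : E} (hx : x ∈ V) :
    ∃ u : E → F, ContDiff ℝ n u ∧ HasCompactSupport u ∧ u =ᶠ[𝓝 x] f := by
  obtain ⟨R, hR, hRV⟩ := Metric.nhds_basis_closedBall.mem_iff.1 (hV.mem_nhds hx)
  let χ : ContDiffBump x := ⟨R / 2, R, by positivity, by linarith⟩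
  refine ⟨fun y => χ y • f y, contDiff_iff_contDiffAt.2 fun y => ?_,
    χ.hasCompactSupport.smul_right, ?_⟩
  · by_cases hy : y ∈ tsupport χ
    · exact χ.contDiffAt.smul (hf.contDiffAt (hV.mem_nhds (hRV (χ.tsupport_eq ▸ hy))))
    · refine (contDiffAt_const (c := 0)).congr_of_eventuallyEq ?_
      filter_upwards [notMem_tsupport_iff_eventuallyEq.1 hy] with y hy
      simp [hy]
  · filter_upwards [χ.eventuallyEq_one] with y hy
    simp [hy]

section CauchyTransform

/-- The fundamental solution `1 / (π w)` of the operator `∂/∂z̄`. -/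
noncomputable def cauchyKernel (w : ℂ) : ℂ := (π * w)⁻¹

/-- The Cauchy transform `z ↦ ∫ h(w) / (π (z - w)) dw`, encoded as a convolution so that the
library's regularity results apply; it is `0` where the integral diverges. -/
noncomputable def cauchyTransform (h : ℂ → ℂ) : ℂ → ℂ :=
  cauchyKernel ⋆[ContinuousLinearMap.mul ℝ ℂ, volume] h

lemma norm_cauchyKernel (w : ℂ) : ‖cauchyKernel w‖ = π⁻¹ * ‖w‖ ^ (-1 : ℝ) := by
  simp [cauchyKernel, Real.rpow_neg_one, abs_of_pos Real.pi_pos, mul_comm]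

@[fun_prop]
lemma measurable_cauchyKernel : Measurable cauchyKernel := by
  unfold cauchyKernel
  fun_prop

lemma locallyIntegrable_cauchyKernel : LocallyIntegrable cauchyKernel :=
  locallyIntegrable_of_norm_le_rpow (C := π⁻¹) (α := 1) (by simp) (by simp)
    (.of_forall fun w => (norm_cauchyKernel w).le) (by fun_prop)

lemma hasDerivAt_cauchyKernel {w : ℂ} (hw : w ≠ 0) :
    HasDerivAt cauchyKernel (-(π * w ^ 2)⁻¹) w := by
  have hπ : (π : ℂ) ≠ 0 := ofReal_ne_zero.2 Real.pi_ne_zero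
  refine (((hasDerivAt_id w).const_mul (π : ℂ)).inv (mul_ne_zero hπ hw)).congr_deriv ?_
  simp only [id]
  field_simp

variable {h : ℂ → ℂ}

lemma contDiff_cauchyTransform {n : ℕ∞} (hh : ContDiff ℝ n h) (hc : HasCompactSupport h) :
    ContDiff ℝ n (cauchyTransform h) :=
  hc.contDiff_convolution_right _ locallyIntegrable_cauchyKernel hh

lemma fderiv_cauchyTransform_apply (hh : ContDiff ℝ 1 h) (hc : HasCompactSupport h) (z v : ℂ) :
    fderiv ℝ (cauchyTransform h) z v = cauchyTransform (fun w => fderiv ℝ h w v) z := by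
  rw [cauchyTransform,
    (hc.hasFDerivAt_convolution_right _ locallyIntegrable_cauchyKernel hh z).fderiv,
    convolution_precompR_apply _ locallyIntegrable_cauchyKernel (hc.fderiv ℝ)
      (hh.continuous_fderiv one_ne_zero)]
  rfl

lemma cauchyTransform_dbar (hh : ContDiff ℝ 1 h) (hc : HasCompactSupport h) (z : ℂ) :
    cauchyTransform (dbar h) z = h z := by
  have hπ : (π : ℂ) ≠ 0 := ofReal_ne_zero.2 Real.pi_ne_zero
  calc cauchyTransform (dbar h) z
      = ∫ w, cauchyKernel (-w) * dbar h (z - -w) :=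
        (integral_neg_eq_self (fun w => cauchyKernel w * dbar h (z - w)) volume).symm
    _ = ∫ w, -(π : ℂ)⁻¹ * (w⁻¹ * dbar h (z + w)) := by
        simp only [cauchyKernel, mul_neg, inv_neg, mul_inv, sub_neg_eq_add, neg_mul, mul_assoc]
    _ = h z := by
        rw [integral_const_mul, integral_inv_mul_dbar hh hc]
        field_simp

lemma dbar_cauchyTransform (hh : ContDiff ℝ 1 h) (hc : HasCompactSupport h) (z : ℂ) :
    dbar (cauchyTransform h) z = h z := by
  have hint (v : ℂ) : Integrable fun t => cauchyKernel t * fderiv ℝ h (z - t) v :=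
    (hc.fderiv_apply (𝕜 := ℝ) v).convolutionExists_right (ContinuousLinearMap.mul ℝ ℂ)
      locallyIntegrable_cauchyKernel
      ((hh.continuous_fderiv one_ne_zero).clm_apply continuous_const) z
  calc dbar (cauchyTransform h) z
      = ((∫ t, cauchyKernel t * fderiv ℝ h (z - t) 1) +
          I * ∫ t, cauchyKernel t * fderiv ℝ h (z - t) I) / 2 := by
        rw [dbar, fderiv_cauchyTransform_apply hh hc, fderiv_cauchyTransform_apply hh hc]
        rfl
    _ = ∫ t, cauchyKernel t * dbar h (z - t) := by
        rw [← integral_const_mul, ← integral_add (hint 1) ((hint I).const_mul I), ← integral_div]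
        congr 1 with t
        rw [dbar]
        ring
    _ = h z := cauchyTransform_dbar hh hc z

lemma convolutionExistsAt_cauchyKernel (hh : Integrable h) {z : ℂ} (hz : z ∉ tsupport h) :
    ConvolutionExistsAt cauchyKernel h z (ContinuousLinearMap.mul ℝ ℂ) := by
  obtain ⟨ε, hε, hfar⟩ := exists_forall_ball_le_dist_of_notMem_tsupport hz
  rw [convolutionExistsAt_iff_integrable_swap]
  refine (hh.norm.const_mul (π⁻¹ * ε⁻¹)).mono'
    (.mul (by fun_prop : Measurable fun w => cauchyKernel (z - w)).aestronglyMeasurable hh.1)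
    (.of_forall fun w => ?_)
  rcases eq_or_ne (h w) 0 with hw | hw
  · simp [hw]
  have hzw : ε ≤ ‖z - w‖ := dist_eq_norm z w ▸ hfar z (mem_ball_self hε) w hw
  rw [ContinuousLinearMap.mul_apply', norm_mul, norm_cauchyKernel, Real.rpow_neg_one]
  gcongr

lemma differentiableOn_cauchyTransform (hh : Integrable h) :
    DifferentiableOn ℂ (cauchyTransform h) (tsupport h)ᶜ := by
  intro z hz
  refine DifferentiableAt.differentiableWithinAt ?_
  obtain ⟨ε, hε, hfar⟩ := exists_forall_ball_le_dist_of_notMem_tsupport hz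
  have hmeas (x : ℂ) : AEStronglyMeasurable (fun w => cauchyKernel (x - w) * h w) :=
    .mul (by fun_prop : Measurable fun w => cauchyKernel (x - w)).aestronglyMeasurable hh.1
  have hbound (w x : ℂ) (hx : x ∈ ball z ε) :
      ‖-(π * (x - w) ^ 2)⁻¹ * h w‖ ≤ (π * ε ^ 2)⁻¹ * ‖h w‖ := by
    rcases eq_or_ne (h w) 0 with hw | hw
    · simp [hw]
    have hxw : ε ≤ ‖x - w‖ := dist_eq_norm x w ▸ hfar x hx w hw
    rw [norm_mul, norm_neg, norm_inv, norm_mul, norm_pow, norm_real,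
      Real.norm_of_nonneg Real.pi_pos.le]
    gcongr
  have hderiv (w x : ℂ) (hx : x ∈ ball z ε) : HasDerivAt (fun x => cauchyKernel (x - w) * h w)
      (-(π * (x - w) ^ 2)⁻¹ * h w) x := by
    rcases eq_or_ne (h w) 0 with hw | hw
    · simpa [hw] using hasDerivAt_const x (0 : ℂ)
    have hxw : x ≠ w := dist_pos.1 (hε.trans_le (hfar x hx w hw))
    exact ((hasDerivAt_cauchyKernel (sub_ne_zero.2 hxw)).comp_sub_const x w).mul_const (h w)
  have hconv : cauchyTransform h = fun x => ∫ w, cauchyKernel (x - w) * h w := by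
    ext x
    exact convolution_eq_swap _
  rw [hconv]
  exact (hasDerivAt_integral_of_dominated_loc_of_deriv_le (ball_mem_nhds z hε)
    (.of_forall hmeas)
    (convolutionExistsAt_iff_integrable_swap.1 (convolutionExistsAt_cauchyKernel hh hz))
    (F' := fun x w => -(π * (x - w) ^ 2)⁻¹ * h w)
    (.mul (by fun_prop : Measurable _).aestronglyMeasurable hh.1) (.of_forall hbound)
    (hh.norm.const_mul _) (.of_forall hderiv)).2.differentiableAt

variable {F u : ℂ → ℂ} {V : Set ℂ}

lemma exists_analyticAt_cauchyTransform_eventuallyEq_add (hF : Integrable F) (hu : Continuous u)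
    (hc : HasCompactSupport u) {z : ℂ} (hz : u =ᶠ[𝓝 z] F) :
    ∃ v, AnalyticAt ℂ v z ∧ cauchyTransform F =ᶠ[𝓝 z] cauchyTransform u + v := by
  have hsupp : z ∉ tsupport (F - u) := by
    rw [notMem_tsupport_iff_eventuallyEq]
    filter_upwards [hz] with w hw
    simp [hw]
  have hint : Integrable (F - u) := hF.sub (hu.integrable_of_hasCompactSupport hc)
  have hnhds : (tsupport (F - u))ᶜ ∈ 𝓝 z := (isClosed_tsupport _).isOpen_compl.mem_nhds hsupp
  refine ⟨cauchyTransform (F - u), (differentiableOn_cauchyTransform hint).analyticAt hnhds, ?_⟩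
  filter_upwards [hnhds] with w hw
  have hadd := (hc.convolutionExists_right (ContinuousLinearMap.mul ℝ ℂ)
    locallyIntegrable_cauchyKernel hu w).distrib_add (convolutionExistsAt_cauchyKernel hint hw)
  rwa [add_sub_cancel] at hadd

theorem contDiffOn_cauchyTransform (hF : Integrable F) (hV : IsOpen V) {n : ℕ∞}
    (hFV : ContDiffOn ℝ n F V) : ContDiffOn ℝ n (cauchyTransform F) V := by
  intro z hz
  obtain ⟨u, hu, hc, huF⟩ := exists_contDiff_hasCompactSupport_eventuallyEq hV hFV hz
  obtain ⟨v, hv, heq⟩ :=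
    exists_analyticAt_cauchyTransform_eventuallyEq_add hF hu.continuous hc huF
  exact (((contDiff_cauchyTransform hu hc).contDiffAt.add
    (hv.restrictScalars (𝕜 := ℝ)).contDiffAt).congr_of_eventuallyEq heq).contDiffWithinAt

theorem eqOn_dbar_cauchyTransform (hF : Integrable F) (hV : IsOpen V) (hFV : ContDiffOn ℝ 1 F V) :
    EqOn (dbar (cauchyTransform F)) F V := by
  intro z hz
  obtain ⟨u, hu, hc, huF⟩ := exists_contDiff_hasCompactSupport_eventuallyEq (n := 1) hV hFV hz
  obtain ⟨v, hv, heq⟩ :=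
    exists_analyticAt_cauchyTransform_eventuallyEq_add hF hu.continuous hc huF
  have hCu := (contDiff_cauchyTransform hu hc).differentiable one_ne_zero z
  rw [dbar_congr_of_eventuallyEq heq, dbar_add hCu (hv.differentiableAt.restrictScalars ℝ),
    dbar_cauchyTransform hu hc, dbar_eq_zero_of_differentiableAt hv.differentiableAt,
    huF.eq_of_nhds, add_zero]

end CauchyTransform

section Solution

variable {p q : ℝ≥0∞}

lemma memLp_indicator_ball_cauchyKernel (hp : p < 2) :
    MemLp ((ball 0 1).indicator cauchyKernel) p := by
  have hp' : 1 * p.toReal < Module.finrank ℝ ℂ := by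
    simpa using ENNReal.toReal_strict_mono ENNReal.ofNat_ne_top hp
  refine (memLp_indicator_iff_restrict measurableSet_ball).2 ?_
  refine (memLp_restrict_norm_rpow_neg isBounded_ball hp.ne_top hp').of_le_mul (c := π⁻¹)
    (by fun_prop : Measurable _).aestronglyMeasurable (.of_forall fun w => ?_)
  rw [norm_cauchyKernel, Real.norm_of_nonneg (by positivity)]

lemma memLp_top_indicator_compl_ball_cauchyKernel :
    MemLp ((ball 0 1)ᶜ.indicator cauchyKernel) ∞ := by
  refine memLp_top_of_bound (C := π⁻¹)
    (measurable_cauchyKernel.indicator measurableSet_ball.compl).aestronglyMeasurable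
    (.of_forall fun w => ?_)
  by_cases hw : w ∈ ball (0 : ℂ) 1
  · simp [hw, Real.pi_pos.le]
  · have hw1 : 1 ≤ ‖w‖ := by simpa using hw
    rw [indicator_of_mem (mem_compl hw), norm_cauchyKernel, Real.rpow_neg_one]
    exact mul_le_of_le_one_right (by positivity) (inv_le_one_of_one_le₀ hw1)

theorem continuous_cauchyTransform (hq : 2 < q) (hq' : q ≠ ∞) {F : ℂ → ℂ} (hF : Integrable F)
    (hFq : MemLp F q) : Continuous (cauchyTransform F) := by
  have hq1 : 1 ≤ q := one_le_two.trans hq.le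
  have : q.HolderConjugate q.conjExponent := .conjExponent hq1
  have : q.conjExponent.HolderConjugate q := .symm
  have hp : q.conjExponent < 2 := by
    rw [ENNReal.conjExponent, ← one_add_one_eq_two]
    exact ENNReal.add_lt_add_left ENNReal.one_ne_top
      (ENNReal.inv_lt_one.2 (lt_tsub_iff_left.2 (one_add_one_eq_two.trans_lt hq)))
  have hnear := memLp_indicator_ball_cauchyKernel hp
  have hfar := memLp_top_indicator_compl_ball_cauchyKernel
  have hF1 : MemLp F 1 := memLp_one_iff_integrable.2 hF
  rw [cauchyTransform, ← indicator_self_add_compl (ball 0 1) cauchyKernel,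
    (convolutionExists_of_memLp _ hnear hFq).add_distrib (convolutionExists_of_memLp _ hfar hF1)]
  exact (continuous_convolution_of_memLp _ hq' hnear hFq).add
    (continuous_convolution_of_memLp _ ENNReal.one_ne_top hfar hF1)

theorem dbar_lemma_small_alpha_general {U : Set ℂ} (hU : MeasurableSet U) (hUfin : volume U ≠ ∞)
    {f : ℂ → ℂ} {q : ℝ≥0∞} (hq : 2 < q) (hf : MemLp f q (volume.restrict U)) :
    ∃ g : ℂ → ℂ, Continuous g ∧ ∀ (n : ℕ∞) (V : Set ℂ), n ≠ 0 → IsOpen V → V ⊆ U →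
      ContDiffOn ℝ n f V → ContDiffOn ℝ n g V ∧ EqOn (dbar g) f V := by
  have : IsFiniteMeasure (volume.restrict U) := ⟨by simpa using hUfin.lt_top⟩
  obtain ⟨s, hs, hsq⟩ := exists_between hq
  have hF {t : ℝ≥0∞} (ht : t ≤ q) : MemLp (U.indicator f) t :=
    (memLp_indicator_iff_restrict hU).2 (hf.mono_exponent ht)
  have hF1 : Integrable (U.indicator f) :=
    memLp_one_iff_integrable.1 (hF (one_le_two.trans hq.le))
  refine ⟨cauchyTransform (U.indicator f),
    continuous_cauchyTransform hs hsq.ne_top hF1 (hF hsq.le), fun n V hn hV hVU hfV => ?_⟩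
  have hindicator : EqOn (U.indicator f) f V := fun z hz => indicator_of_mem (hVU hz) f
  have hFV : ContDiffOn ℝ n (U.indicator f) V := hfV.congr hindicator
  have hFV1 : ContDiffOn ℝ 1 (U.indicator f) V :=
    hFV.of_le (by exact_mod_cast Order.one_le_iff_ne_zero.2 hn)
  exact ⟨contDiffOn_cauchyTransform hF1 hV hFV,
    (eqOn_dbar_cauchyTransform hF1 hV hFV1).trans hindicator⟩

end Solution

/-- For `0 < α < 1/2` and `f` smooth on the punctured unit disk with `|z|^(2α) f(z)` bounded
near `0`, on any relatively compact open `U ∋ 0` the equation `∂g/∂z̄ = f` has a solution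
which extends continuously to the origin. -/
theorem dbar_lemma_small_alpha (α : ℝ) (hα1 : 0 < α) (hα2 : α < 1 / 2)
    (f : ℂ → ℂ) (hf : ContDiffOn ℝ (⊤ : ℕ∞) f (ball (0 : ℂ) 1 \ {0}))
    (C r : ℝ) (hr : 0 < r)
    (hbd : ∀ z : ℂ, 0 < ‖z‖ → ‖z‖ < r → ‖z‖ ^ (2 * α) * ‖f z‖ ≤ C)
    (U : Set ℂ) (hU : IsOpen U) (h0U : (0 : ℂ) ∈ U)
    (hUsub : closure U ⊆ ball (0 : ℂ) 1) (hUcpt : IsCompact (closure U)) :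
    ∃ g : ℂ → ℂ,
      ContDiffOn ℝ (⊤ : ℕ∞) g (U \ {0}) ∧
      (∀ z ∈ U \ {0}, dbar g z = f z) ∧
      ContinuousOn g U := by
  have hUfin : volume U ≠ ∞ := ((measure_mono subset_closure).trans_lt hUcpt.measure_lt_top).ne
  obtain ⟨q, hq, hfq⟩ : ∃ q > 2, MemLp f q (volume.restrict (closure U)) :=
    exists_gt_memLp_restrict_of_norm_rpow_mul_le hUcpt ENNReal.ofNat_ne_top
      (by simpa using (by linarith : 2 * α * 2 < 2))
      (hf.continuousOn.mono (sdiff_subset_sdiff_left hUsub)) hr hbd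
  obtain ⟨g, hg, hgV⟩ := dbar_lemma_small_alpha_general hU.measurableSet hUfin hq
    (hfq.mono_measure (Measure.restrict_mono subset_closure le_rfl))
  obtain ⟨hsmooth, hdbar⟩ := hgV ⊤ (U \ {0}) (by simp) (hU.sdiff isClosed_singleton) sdiff_subset
    (hf.mono (sdiff_subset_sdiff_left (subset_closure.trans hUsub)))
  exact ⟨g, hsmooth, hdbar, hg.continuousOn⟩
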